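/- Let s ∈ ℝ, let K > 0, and let (ω_n)_{n∈ℤ} and (ω̃_n)_{n∈ℤ} be sequences of real numbers satisfying |ω_n − ω̃_n| ≤ K/⟨n⟩ for all n ∈ ℤ. Then for every u₀ ∈ H^s and every t ∈ ℝ, setting v(t) := Σ_{n∈ℤ} û₀(n) e^{−i ω_n t} e^{2πi n x} and ṽ(t) := Σ_{n∈ℤ} û₀(n) e^{−i ω̃_n t} e^{2πi n x}, one has v(t) − ṽ(t) ∈ H^{s+1} and ‖v(t) − ṽ(t)‖_{H^{s+1}} ≤ K |t| ‖u₀‖_{H^s}. -/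

import Mathlib

/-!
Everything is diagonal in the Fourier basis. Since `θ ↦ e^{iθ}` is `1`-Lipschitz on `ℝ`, the `n`-th
coefficient of the difference of the two flows is at most `|ω n - ω' n| |t| ‖z₀ n‖`, hence at most
`K |t| ‖z₀ n‖ / ⟨n⟩`. The factor `1 / ⟨n⟩` is exactly the one derivative gained, so the squared norm
of the difference in `H^{s+1}` is dominated term by term by `(K |t|)²` times that of `z₀` in `H^s`.
-/


open Filter Complex

noncomputable section

/-- The weight `⟨n⟩ = max(1, |n|)` as a real number. -/
def jap (n : ℤ) : ℝ := max 1 |(n : ℝ)|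

/-- The `n`-th summand of the squared `H^s` norm of a sequence of Fourier coefficients. -/
def sobTerm (s : ℝ) (z : ℤ → ℂ) (n : ℤ) : ℝ := jap n ^ (2 * s) * ‖z n‖ ^ 2

/-- Membership in the Sobolev space `H^s` on the circle, where a distribution is
identified with its sequence of Fourier coefficients `(û(n))_{n ∈ ℤ}`. -/
def InH (s : ℝ) (z : ℤ → ℂ) : Prop := Summable (sobTerm s z)

/-- The `H^s` norm `(∑ ⟨n⟩^{2s} |û(n)|²)^{1/2}`. -/
def hnorm (s : ℝ) (z : ℤ → ℂ) : ℝ := Real.sqrt (∑' n, sobTerm s z n)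

/-- Continuity of a curve `t ↦ z(t)` with values in `H^s`. -/
def HCont (s : ℝ) (z : ℝ → ℤ → ℂ) : Prop :=
  ∀ t₀ : ℝ, Tendsto (fun t => hnorm s (fun n => z t n - z t₀ n)) (nhds t₀) (nhds 0)

/-- `z'` is the derivative at time `t₀` of the curve `t ↦ z(t)` in `H^s`. -/
def HDerivAt (s : ℝ) (z : ℝ → ℤ → ℂ) (z' : ℤ → ℂ) (t₀ : ℝ) : Prop :=
  Tendsto (fun t => hnorm s (fun n => z t n - z t₀ n - (t - t₀) • z' n) / |t - t₀|)
    (nhdsWithin t₀ {t₀}ᶜ) (nhds 0)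

/-- The `n`-th Fourier coefficient of `|u|² u`, where `z` is the sequence of Fourier
coefficients of `u`. -/
def NLterm (z : ℤ → ℂ) (n : ℤ) : ℂ :=
  ∑' p : ℤ × ℤ, z p.1 * z p.2 * (starRingEnd ℂ) (z (p.1 + p.2 - n))

/-- `∫₀¹ |u(x)|² dx` expressed via Parseval's identity through the Fourier
coefficients `z` of `u`. -/
def l2sq (z : ℤ → ℂ) : ℝ := ∑' n, ‖z n‖ ^ 2

/-- `z : ℝ → (ℤ → ℂ)` (a curve of sequences of Fourier coefficients) is a solution of the
defocusing NLS equation `i ∂ₜ u = -∂ₓ² u + 2 |u|² u` on the circle with initial data `z₀ ∈ H^σ`: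
it is continuous as a curve in `H^σ`, continuously differentiable as a curve in `H^{σ-2}`,
and satisfies `∂ₜ u = i ∂ₓ² u - 2 i |u|² u` in `H^{σ-2}` for all times, where on the Fourier
side `∂ₓ²` is multiplication by `-4π²n²`. -/
def IsNLSSolution (σ : ℝ) (z : ℝ → ℤ → ℂ) (z₀ : ℤ → ℂ) : Prop :=
  z 0 = z₀ ∧ (∀ t, InH σ (z t)) ∧ HCont σ z ∧
  ∃ z' : ℝ → ℤ → ℂ,
    (∀ t, InH (σ - 2) (z' t)) ∧ (∀ t, HDerivAt (σ - 2) z (z' t) t) ∧ HCont (σ - 2) z' ∧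
    ∀ t n, z' t n =
      Complex.I * (-(4 * (Real.pi : ℂ) ^ 2 * (n : ℂ) ^ 2)) * z t n
        - 2 * Complex.I * NLterm (z t) n

/-- The nearly linear flow `v(t) = ∑ₙ û₀(n) e^{-i ωₙ t} e^{2πinx}`, on the Fourier side. -/
def vflow (z₀ : ℤ → ℂ) (ω : ℤ → ℝ) (t : ℝ) (n : ℤ) : ℂ :=
  Complex.exp (-Complex.I * (ω n : ℂ) * (t : ℂ)) * z₀ n

/-- The modified linear Schrödinger flow
`w(t) = e^{-ict} ∑ₙ û₀(n) e^{-i 4π²n² t} e^{2πinx}` with `c = 4 ∫₀¹ |u₀|² dx`,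
on the Fourier side. -/
def wflow (z₀ : ℤ → ℂ) (t : ℝ) (n : ℤ) : ℂ :=
  Complex.exp (-Complex.I * (4 * (l2sq z₀ : ℂ)) * (t : ℂ)) *
    Complex.exp (-Complex.I * (4 * (Real.pi : ℂ) ^ 2 * (n : ℂ) ^ 2) * (t : ℂ)) * z₀ n

/-- Weak convergence in the Sobolev sequence space `𝔥^s`: testing against every `y ∈ 𝔥^s`
with the `𝔥^s` inner product. -/
def WeakConv (s : ℝ) (z : ℕ → ℤ → ℂ) (zl : ℤ → ℂ) : Prop :=
  ∀ y : ℤ → ℂ, InH s y →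
    Tendsto (fun j => ∑' n : ℤ, ((jap n ^ (2 * s) : ℝ) : ℂ) * ((starRingEnd ℂ) (y n) * z j n))
      atTop (nhds (∑' n : ℤ, ((jap n ^ (2 * s) : ℝ) : ℂ) * ((starRingEnd ℂ) (y n) * zl n)))

lemma jap_pos (n : ℤ) : 0 < jap n := lt_of_lt_of_le one_pos (le_max_left _ _)

lemma sobTerm_nonneg (s : ℝ) (z : ℤ → ℂ) (n : ℤ) : 0 ≤ sobTerm s z n :=
  mul_nonneg (Real.rpow_nonneg (jap_pos n).le _) (sq_nonneg _)

/-- The phase `θ ↦ e^{-iθt}` is `|t|`-Lipschitz. -/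
lemma norm_phase_sub_le (a b t : ℝ) :
    ‖exp (-I * (a : ℂ) * (t : ℂ)) - exp (-I * (b : ℂ) * (t : ℂ))‖ ≤ |a - b| * |t| := by
  have h : exp (-I * (a : ℂ) * (t : ℂ)) - exp (-I * (b : ℂ) * (t : ℂ)) =
      exp (I * ((-(b * t) : ℝ) : ℂ)) * (exp (I * (((b - a) * t : ℝ) : ℂ)) - 1) := by
    rw [mul_sub, ← exp_add, mul_one]
    push_cast
    congr 2 <;> ring
  rw [h, norm_mul, norm_exp_I_mul_ofReal, one_mul]
  refine (Real.norm_exp_I_mul_ofReal_sub_one_le).trans ?_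
  rw [Real.norm_eq_abs, abs_mul, abs_sub_comm]

lemma sobTerm_vflow_sub_le {s K : ℝ} {ω ω' : ℤ → ℝ}
    (hω : ∀ n : ℤ, |ω n - ω' n| ≤ K / jap n) (z₀ : ℤ → ℂ) (t : ℝ) (n : ℤ) :
    sobTerm (s + 1) (fun n => vflow z₀ ω t n - vflow z₀ ω' t n) n ≤
      (K * |t|) ^ 2 * sobTerm s z₀ n := by
  have hj := jap_pos n
  have hd : ‖vflow z₀ ω t n - vflow z₀ ω' t n‖ ≤ K / jap n * |t| * ‖z₀ n‖ := by
    rw [vflow, vflow, ← sub_mul, norm_mul]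
    gcongr
    exact (norm_phase_sub_le _ _ _).trans (by gcongr; exact hω n)
  have hp : jap n ^ (2 * (s + 1)) = jap n ^ (2 * s) * jap n ^ 2 := by
    rw [← Real.rpow_two, ← Real.rpow_add hj]
    ring_nf
  calc sobTerm (s + 1) (fun n => vflow z₀ ω t n - vflow z₀ ω' t n) n
      ≤ jap n ^ (2 * (s + 1)) * (K / jap n * |t| * ‖z₀ n‖) ^ 2 := by
        unfold sobTerm
        gcongr
    _ = (K * |t|) ^ 2 * sobTerm s z₀ n := by
        rw [hp, sobTerm]
        field_simp

/-- if `|ωₙ - ω̃ₙ| ≤ K/⟨n⟩` for all `n`, then for every `u₀ ∈ H^s` and `t ∈ ℝ`,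
the difference `v(t) - ṽ(t)` of the two nearly linear flows lies in `H^{s+1}` and
`‖v(t) - ṽ(t)‖_{H^{s+1}} ≤ K |t| ‖u₀‖_{H^s}`. -/
theorem stmt8 (s K : ℝ) (hK : 0 < K) (ω ω' : ℤ → ℝ)
    (hω : ∀ n : ℤ, |ω n - ω' n| ≤ K / jap n)
    (z₀ : ℤ → ℂ) (h₀ : InH s z₀) (t : ℝ) :
    InH (s + 1) (fun n => vflow z₀ ω t n - vflow z₀ ω' t n) ∧
    hnorm (s + 1) (fun n => vflow z₀ ω t n - vflow z₀ ω' t n) ≤ K * |t| * hnorm s z₀ := by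
  have hle := sobTerm_vflow_sub_le (s := s) hω z₀ t
  have hsum : Summable fun n => (K * |t|) ^ 2 * sobTerm s z₀ n := h₀.mul_left _
  have hin : InH (s + 1) (fun n => vflow z₀ ω t n - vflow z₀ ω' t n) :=
    hsum.of_nonneg_of_le (sobTerm_nonneg _ _) hle
  refine ⟨hin, ?_⟩
  have hKt : 0 ≤ K * |t| := by positivity
  calc hnorm (s + 1) (fun n => vflow z₀ ω t n - vflow z₀ ω' t n)
      ≤ √((K * |t|) ^ 2 * ∑' n, sobTerm s z₀ n) := by
        rw [← tsum_mul_left]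
        exact Real.sqrt_le_sqrt (hin.tsum_le_tsum hle hsum)
    _ = K * |t| * hnorm s z₀ := by
        rw [Real.sqrt_mul (sq_nonneg _), Real.sqrt_sq hKt, hnorm]

end
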